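/- Let (Ω, μ) be a probability space, H : Ω → (complex N_r × N_t matrices) a random channel matrix such that ω ↦ H(ω)ᴴH(ω) is Bochner integrable, W a fixed complex N_t × N_s matrix, and σ > 0 a real number. Then ∫ log det(I + σ⁻²·WᴴH(ω)ᴴH(ω)W) dμ(ω) ≤ log det(I + σ⁻²·Wᴴ (∫ HᴴH dμ) W), where all determinants are positive real numbers. -/

import Mathlib

/-!
`log det` is concave on positive definite matrices, and Jensen's inequality for a concave function
follows by integrating the inequality with the tangent at the mean. The tangent inequality is
`log det A ≤ log det B + re tr (B⁻¹ A) - n` (`log_det_le_tangent`); writing `B⁻¹ = Cᴴ C`, it becomes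
`log det M ≤ tr M - n` for `M = C A Cᴴ`, which is `log x ≤ x - 1` summed over the eigenvalues of `M`.

Take `B = I + σ⁻² Wᴴ 𝔼[HᴴH] W` and `A = I + σ⁻² Wᴴ HᴴH W`. The right-hand side is affine in the entries
of `HᴴH`, hence integrable with integral `log det B`. The left-hand side is nonnegative
(`log_det_one_add_nonneg`), so the integrals compare without knowing that the left-hand side is
integrable.
-/

open Matrix MeasureTheory
open scoped ComplexOrder

/-- The logarithmic inequality `log x ≤ x - 1`, summed over the eigenvalues. -/
lemma log_det_le_trace_sub {n : ℕ} {M : Matrix (Fin n) (Fin n) ℂ} (hM : M.PosDef) :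
    Real.log M.det.re ≤ M.trace.re - n := by
  have hd : M.det.re = ∏ i, hM.1.eigenvalues i := by
    rw [hM.1.det_eq_prod_eigenvalues]
    exact_mod_cast Complex.ofReal_re _
  have ht : M.trace.re = ∑ i, hM.1.eigenvalues i := by
    rw [hM.1.trace_eq_sum_eigenvalues]
    exact_mod_cast Complex.ofReal_re _
  rw [hd, ht, Real.log_prod fun i _ => (hM.eigenvalues_pos i).ne']
  calc ∑ i, Real.log (hM.1.eigenvalues i) ≤ ∑ i, (hM.1.eigenvalues i - 1) :=
        Finset.sum_le_sum fun i _ => Real.log_le_sub_one_of_pos (hM.eigenvalues_pos i)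
    _ = _ := by simp

lemma exists_inv_eq_conjTranspose_mul {n : ℕ} {B : Matrix (Fin n) (Fin n) ℂ} (hB : B.PosDef) :
    ∃ C : Matrix (Fin n) (Fin n) ℂ, B⁻¹ = Cᴴ * C := by
  open scoped MatrixOrder Matrix.Norms.L2Operator in
  exact CStarAlgebra.nonneg_iff_eq_star_mul_self.mp hB.inv.posSemidef.nonneg

/-- Concavity of `log det`: its graph lies below the tangent hyperplane at `B`. -/
lemma log_det_le_tangent {n : ℕ} {A B : Matrix (Fin n) (Fin n) ℂ} (hA : A.PosDef)
    (hB : B.PosDef) :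
    Real.log A.det.re ≤ Real.log B.det.re + (B⁻¹ * A).trace.re - n := by
  obtain ⟨C, hC⟩ := exists_inv_eq_conjTranspose_mul hB
  have hCu : IsUnit C := by
    have h : IsUnit (Cᴴ * C) := hC ▸ hB.inv.isUnit
    rw [isUnit_iff_isUnit_det, det_mul] at h
    exact (isUnit_iff_isUnit_det C).mpr (isUnit_of_mul_isUnit_right h)
  have hM : (C * A * Cᴴ).PosDef :=
    hA.mul_mul_conjTranspose_same (vecMul_injective_of_isUnit hCu)
  have ht : (C * A * Cᴴ).trace = (B⁻¹ * A).trace := by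
    rw [hC, trace_mul_comm, Matrix.mul_assoc]
  have hd : B.det * (C * A * Cᴴ).det = A.det := by
    have h : (C * A * Cᴴ).det = (B⁻¹).det * A.det := by
      rw [hC, det_mul, det_mul, det_mul]; ring
    rw [h, ← mul_assoc, ← det_mul, mul_nonsing_inv _ ((isUnit_iff_isUnit_det B).mp hB.isUnit),
      det_one, one_mul]
  have hBp := Complex.pos_iff.mp hB.det_pos
  have hMp := Complex.pos_iff.mp hM.det_pos
  have hre : A.det.re = B.det.re * (C * A * Cᴴ).det.re := by
    rw [← hd, Complex.mul_re, ← hBp.2, zero_mul, sub_zero]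
  have := log_det_le_trace_sub hM
  rw [ht] at this
  rw [hre, Real.log_mul hBp.1.ne' hMp.1.ne']
  linarith

lemma log_det_one_add_nonneg {n : ℕ} {P : Matrix (Fin n) (Fin n) ℂ} (hP : P.PosSemidef) :
    0 ≤ Real.log (1 + P).det.re := by
  have hB : (1 + P).PosDef := PosDef.one.add_posSemidef hP
  -- The tangent at `1 + P`, evaluated at `1`, gives `n - tr (1 + P)⁻¹ = tr ((1 + P)⁻¹ P)` as bound.
  have h := log_det_le_tangent PosDef.one hB
  obtain ⟨C, hC⟩ := exists_inv_eq_conjTranspose_mul hB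
  have ht : ((1 + P)⁻¹ * P).trace = (C * P * Cᴴ).trace := by
    rw [hC, trace_mul_comm (C * P), Matrix.mul_assoc]
  have h0 : 0 ≤ ((1 + P)⁻¹ * P).trace.re := by
    rw [ht]
    exact (Complex.nonneg_iff.mp (hP.mul_mul_conjTranspose_same C).trace_nonneg).1
  have hs : ((1 + P)⁻¹ * 1).trace + ((1 + P)⁻¹ * P).trace = n := by
    rw [← trace_add, ← Matrix.mul_add,
      nonsing_inv_mul _ ((isUnit_iff_isUnit_det _).mp hB.isUnit)]
    simp
  have hs' := congrArg Complex.re hs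
  simp only [Complex.add_re, Complex.natCast_re, det_one, Complex.one_re, Real.log_one] at hs' h
  linarith

/-- The mean of a random positive semidefinite matrix is positive semidefinite. -/
lemma posSemidef_integral {n : ℕ} {Ω : Type*} [MeasurableSpace Ω] {μ : Measure Ω}
    {G : Ω → Matrix (Fin n) (Fin n) ℂ} (hint : ∀ i j, Integrable (fun ω => G ω i j) μ)
    (hG : ∀ ω, (G ω).PosSemidef) :
    (Matrix.of fun i j => ∫ ω, G ω i j ∂μ).PosSemidef := by
  refine PosSemidef.of_dotProduct_mulVec_nonneg ?_ fun x => ?_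
  · ext i j
    simp only [conjTranspose_apply, of_apply]
    rw [← starRingEnd_apply, ← integral_conj]
    congr 1
    ext ω
    exact (hG ω).1.apply i j
  · have h : star x ⬝ᵥ (Matrix.of fun i j => ∫ ω, G ω i j ∂μ) *ᵥ x
        = ∫ ω, star x ⬝ᵥ G ω *ᵥ x ∂μ := by
      simp only [dotProduct, mulVec, of_apply]
      rw [integral_finsetSum _ fun i _ =>
        (integrable_finsetSum _ fun j _ => (hint i j).mul_const _).const_mul _]
      refine Finset.sum_congr rfl fun i _ => ?_
      rw [integral_const_mul, integral_finsetSum _ fun j _ => (hint i j).mul_const _]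
      simp only [integral_mul_const]
    rw [h]
    exact integral_nonneg fun ω => (hG ω).dotProduct_mulVec_nonneg x

lemma hasIntegral_trace_mul {n : ℕ} {Ω : Type*} [MeasurableSpace Ω] {μ : Measure Ω}
    {G : Ω → Matrix (Fin n) (Fin n) ℂ} (hint : ∀ i j, Integrable (fun ω => G ω i j) μ)
    (K : Matrix (Fin n) (Fin n) ℂ) :
    Integrable (fun ω => (K * G ω).trace) μ ∧
      ∫ ω, (K * G ω).trace ∂μ = (K * Matrix.of fun i j => ∫ ω, G ω i j ∂μ).trace := by
  simp only [trace, diag_apply, mul_apply, of_apply]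
  have h1 : ∀ i j, Integrable (fun ω => K i j * G ω j i) μ := fun i j => (hint j i).const_mul _
  refine ⟨integrable_finsetSum _ fun i _ => integrable_finsetSum _ fun j _ => h1 i j, ?_⟩
  rw [integral_finsetSum _ fun i _ => integrable_finsetSum _ fun j _ => h1 i j]
  refine Finset.sum_congr rfl fun i _ => ?_
  rw [integral_finsetSum _ fun j _ => h1 i j]
  simp only [integral_const_mul]

/-- The communication term upper-bounds the ergodic mutual information (Jensen):
for a random channel matrix `H : Ω → ℂ^{N_r × N_t}` with `ω ↦ H(ω)ᴴH(ω)` integrable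
(entrywise Bochner integrals), a fixed precoder `W` and noise level `σ > 0`,
`∫ log det (I + σ⁻²·Wᴴ H(ω)ᴴ H(ω) W) dμ ≤ log det (I + σ⁻²·Wᴴ (∫ HᴴH dμ) W)`,
where all determinants are positive real numbers. -/
theorem stmt_11 (Nr Nt Ns : ℕ) {Ω : Type*} [MeasurableSpace Ω] (μ : Measure Ω)
    [IsProbabilityMeasure μ]
    (H : Ω → Matrix (Fin Nr) (Fin Nt) ℂ)
    (hint : ∀ i j : Fin Nt, Integrable (fun ω => ((H ω)ᴴ * H ω) i j) μ)
    (W : Matrix (Fin Nt) (Fin Ns) ℂ) (σ : ℝ) (hσ : 0 < σ) :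
    (∀ ω : Ω, ((1 : Matrix (Fin Ns) (Fin Ns) ℂ) +
        (σ ^ 2)⁻¹ • (Wᴴ * (H ω)ᴴ * H ω * W)).det.im = 0 ∧
      0 < ((1 : Matrix (Fin Ns) (Fin Ns) ℂ) +
        (σ ^ 2)⁻¹ • (Wᴴ * (H ω)ᴴ * H ω * W)).det.re) ∧
    ((1 : Matrix (Fin Ns) (Fin Ns) ℂ) +
        (σ ^ 2)⁻¹ • (Wᴴ * (Matrix.of fun i j => ∫ ω, ((H ω)ᴴ * H ω) i j ∂μ) * W)).det.im = 0 ∧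
    0 < ((1 : Matrix (Fin Ns) (Fin Ns) ℂ) +
        (σ ^ 2)⁻¹ • (Wᴴ * (Matrix.of fun i j => ∫ ω, ((H ω)ᴴ * H ω) i j ∂μ) * W)).det.re ∧
    (∫ ω, Real.log ((1 : Matrix (Fin Ns) (Fin Ns) ℂ) +
        (σ ^ 2)⁻¹ • (Wᴴ * (H ω)ᴴ * H ω * W)).det.re ∂μ) ≤
      Real.log ((1 : Matrix (Fin Ns) (Fin Ns) ℂ) +
        (σ ^ 2)⁻¹ • (Wᴴ * (Matrix.of fun i j => ∫ ω, ((H ω)ᴴ * H ω) i j ∂μ) * W)).det.re := by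
  have hc : (0 : ℝ) ≤ (σ ^ 2)⁻¹ := by positivity
  set c : ℝ := (σ ^ 2)⁻¹
  set E : Matrix (Fin Nt) (Fin Nt) ℂ := Matrix.of fun i j => ∫ ω, ((H ω)ᴴ * H ω) i j ∂μ with hE
  have hG : ∀ ω, ((H ω)ᴴ * H ω).PosSemidef := fun ω => posSemidef_conjTranspose_mul_self _
  have hP : ∀ G : Matrix (Fin Nt) (Fin Nt) ℂ, G.PosSemidef → (c • (Wᴴ * G * W)).PosSemidef :=
    fun G h => (h.conjTranspose_mul_mul_same W).smul hc
  have hPD : ∀ G : Matrix (Fin Nt) (Fin Nt) ℂ, G.PosSemidef → (1 + c • (Wᴴ * G * W)).PosDef :=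
    fun G h => PosDef.one.add_posSemidef (hP G h)
  have hEp : E.PosSemidef := posSemidef_integral hint hG
  have hassoc : ∀ ω, Wᴴ * (H ω)ᴴ * H ω * W = Wᴴ * ((H ω)ᴴ * H ω) * W := fun ω => by
    rw [Matrix.mul_assoc Wᴴ]
  simp only [hassoc]
  have hBp := Complex.pos_iff.mp (hPD E hEp).det_pos
  refine ⟨fun ω => ?_, hBp.2.symm, hBp.1, ?_⟩
  · have h := Complex.pos_iff.mp (hPD _ (hG ω)).det_pos
    exact ⟨h.2.symm, h.1⟩
  set B := 1 + c • (Wᴴ * E * W) with hB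
  -- By cyclicity, the trace in the tangent inequality is an affine functional of `HᴴH`.
  have htr : ∀ G : Matrix (Fin Nt) (Fin Nt) ℂ, (B⁻¹ * (1 + c • (Wᴴ * G * W))).trace
      = (B⁻¹).trace + ((c • (W * B⁻¹ * Wᴴ)) * G).trace := fun G => by
    rw [Matrix.mul_add, trace_add, Matrix.mul_one, Matrix.mul_smul, Matrix.smul_mul, trace_smul,
      trace_smul, ← Matrix.mul_assoc, trace_mul_comm _ W]
    simp only [Matrix.mul_assoc]
  obtain ⟨hi, hv⟩ := hasIntegral_trace_mul hint (c • (W * B⁻¹ * Wᴴ))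
  have hBB : (B⁻¹ * B).trace = Ns := by
    rw [nonsing_inv_mul _ ((isUnit_iff_isUnit_det B).mp (hPD E hEp).isUnit)]
    simp
  have hi' : Integrable (fun ω => (B⁻¹ * (1 + c • (Wᴴ * ((H ω)ᴴ * H ω) * W))).trace) μ := by
    simp only [htr]
    exact (integrable_const _).add hi
  have hv' : ∫ ω, (B⁻¹ * (1 + c • (Wᴴ * ((H ω)ᴴ * H ω) * W))).trace.re ∂μ = (Ns : ℝ) := by
    have h1 : ∫ ω, (B⁻¹ * (1 + c • (Wᴴ * ((H ω)ᴴ * H ω) * W))).trace ∂μ = (Ns : ℂ) := by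
      simp only [htr]
      rw [integral_add (integrable_const _) hi, hv, ← hE, integral_const, probReal_univ, one_smul,
        ← htr E]
      exact hBB
    have h2 := integral_re hi'
    rw [h1] at h2
    simpa using h2
  have hir : Integrable (fun ω => (B⁻¹ * (1 + c • (Wᴴ * ((H ω)ᴴ * H ω) * W))).trace.re) μ :=
    hi'.re
  calc _ ≤ ∫ ω, (Real.log B.det.re
          + (B⁻¹ * (1 + c • (Wᴴ * ((H ω)ᴴ * H ω) * W))).trace.re - Ns) ∂μ :=
        integral_mono_of_nonneg
          (Filter.Eventually.of_forall fun ω => log_det_one_add_nonneg (hP _ (hG ω)))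
          (((integrable_const _).add hir).sub (integrable_const _))
          (Filter.Eventually.of_forall fun ω => log_det_le_tangent (hPD _ (hG ω)) (hPD E hEp))
    _ = Real.log B.det.re := by
        have hs : Integrable (fun ω => Real.log B.det.re
            + (B⁻¹ * (1 + c • (Wᴴ * ((H ω)ᴴ * H ω) * W))).trace.re) μ :=
          (integrable_const _).add hir
        rw [integral_sub hs (integrable_const _), integral_add (integrable_const _) hir, hv']
        simp
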